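/- arXiv:2304.04856 — 5 statements merged into one kernel-verified Lean document; each statement's English description precedes it below -/
import Mathlib

section
/- Let (Ω, Σ, ℙ) be a probability space, A ⊆ ℝ^d a set, and Z : Ω → ℝ^d an integrable random variable with Z(ω) ∈ A for all ω ∈ Ω. Then the mean 𝔼[Z] = ∫ Z dℙ lies in the convex hull CH(A). -/
open MeasureTheory

/-- In finite dimension, a point outside the interior of a nonempty convex set is weakly separated
from that set by a nonzero functional; here the point is the origin. -/
theorem Convex.exists_ne_zero_forall_nonneg {E : Type*} [NormedAddCommGroup E] [NormedSpace ℝ E]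
    [FiniteDimensional ℝ E] {s : Set E} (hs : Convex ℝ s) (hne : s.Nonempty)
    (h0 : (0 : E) ∉ interior s) :
    ∃ φ : E →L[ℝ] ℝ, φ ≠ 0 ∧ ∀ x ∈ s, 0 ≤ φ x := by
  by_cases hint : (interior s).Nonempty
  · obtain ⟨φ, hφ, h⟩ := geometric_hahn_banach_of_nonempty_interior_point hs h0 hint
    refine ⟨-φ, neg_ne_zero.mpr hφ, fun x hx => ?_⟩
    simpa using h x hx
  · rw [hs.interior_nonempty_iff_affineSpan_eq_top,
      AffineSubspace.affineSpan_eq_top_iff_vectorSpan_eq_top_of_nonempty ℝ E E hne] at hint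
    obtain ⟨ψ, hψ, hker⟩ := Submodule.exists_le_ker_of_lt_top _ (lt_top_iff_ne_top.mpr hint)
    obtain ⟨a, ha⟩ := hne
    have hconst : ∀ x ∈ s, ψ x = ψ a := fun x hx => by
      have h : ψ (x - a) = 0 := hker (vsub_mem_vectorSpan ℝ hx ha)
      rwa [map_sub, sub_eq_zero] at h
    have hψ' : ψ.toContinuousLinearMap ≠ 0 := by simpa using hψ
    rcases le_total 0 (ψ a) with h | h
    · exact ⟨ψ.toContinuousLinearMap, hψ', fun x hx => by simpa [hconst x hx] using h⟩
    · exact ⟨-ψ.toContinuousLinearMap, neg_ne_zero.mpr hψ',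
        fun x hx => by simpa [hconst x hx] using h⟩

/-- A convex set containing almost all values of a centered random vector contains the origin. -/
theorem Convex.zero_mem_of_integral_eq_zero {Ω : Type*} [MeasurableSpace Ω] {μ : Measure Ω}
    [IsProbabilityMeasure μ] {E : Type*} [NormedAddCommGroup E] [NormedSpace ℝ E]
    [FiniteDimensional ℝ E] {s : Set E} (hs : Convex ℝ s) {f : Ω → E} (hf : Integrable f μ)
    (hfs : ∀ᵐ ω ∂μ, f ω ∈ s) (hf0 : ∫ ω, f ω ∂μ = 0) : (0 : E) ∈ s := by
  induction hn : Module.finrank ℝ E using Nat.strong_induction_on generalizing E with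
  | _ n ih =>
  by_contra h0
  obtain ⟨ω, hω⟩ := hfs.exists
  obtain ⟨φ, hφ, hpos⟩ := hs.exists_ne_zero_forall_nonneg ⟨_, hω⟩
    fun h => h0 (interior_subset h)
  have hφf : ∀ᵐ ω ∂μ, φ (f ω) = 0 := by
    refine (integral_eq_zero_iff_of_nonneg_ae ?_ (φ.integrable_comp hf)).mp ?_
    · filter_upwards [hfs] with ω hω using hpos _ hω
    · rw [φ.integral_comp_comm hf, hf0, map_zero]
  let K : Submodule ℝ E := φ.toLinearMap.ker
  obtain ⟨P, hP⟩ := K.subtype.exists_leftInverse_of_injective K.ker_subtype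
  let Q : E →L[ℝ] K := P.toContinuousLinearMap
  have hQ : ∀ x (hx : x ∈ K), Q x = ⟨x, hx⟩ := fun x hx => LinearMap.congr_fun hP ⟨x, hx⟩
  have hK : Module.finrank ℝ K < n := by
    rw [← hn]
    refine Submodule.finrank_lt fun h => hφ ?_
    ext x
    exact LinearMap.congr_fun (LinearMap.ker_eq_top.mp h) x
  suffices h : (0 : K) ∈ K.subtype ⁻¹' s from h0 (by simpa using h)
  refine ih _ hK (hs.linear_preimage K.subtype) (Q.integrable_comp hf) ?_ ?_ rfl
  · filter_upwards [hfs, hφf] with ω hω hω'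
    simpa [hQ (f ω) hω'] using hω
  · rw [Q.integral_comp_comm hf, hf0, map_zero]

/-- In finite dimension, `Convex.integral_mem` holds without assuming that the set is closed. -/
theorem Convex.integral_mem_of_finiteDimensional {Ω : Type*} [MeasurableSpace Ω] {μ : Measure Ω}
    [IsProbabilityMeasure μ] {E : Type*} [NormedAddCommGroup E] [NormedSpace ℝ E]
    [FiniteDimensional ℝ E] {s : Set E} (hs : Convex ℝ s) {f : Ω → E} (hf : Integrable f μ)
    (hfs : ∀ᵐ ω ∂μ, f ω ∈ s) : ∫ ω, f ω ∂μ ∈ s := by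
  have hcomplete : CompleteSpace E := FiniteDimensional.complete ℝ E
  have h := (hs.translate_preimage_right (∫ ω, f ω ∂μ)).zero_mem_of_integral_eq_zero
    (f := fun ω => f ω - ∫ ω, f ω ∂μ) (hf.sub (integrable_const _)) (by simpa using hfs)
    (by simp [integral_sub hf (integrable_const _)])
  simpa using h

/-- The mean of an integrable `ℝ^d`-valued random variable taking values in a
set `A` lies in the convex hull of `A`. -/
theorem stmt_2 {Ω : Type*} [MeasurableSpace Ω] (ℙ : Measure Ω) [IsProbabilityMeasure ℙ]
    (d : ℕ) (A : Set (Fin d → ℝ)) (Z : Ω → Fin d → ℝ)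
    (hZint : Integrable Z ℙ) (hZA : ∀ ω, Z ω ∈ A) :
    (∫ ω, Z ω ∂ℙ) ∈ convexHull ℝ A :=
  (convex_convexHull ℝ A).integral_mem_of_finiteDimensional hZint
    (ae_of_all _ fun ω => subset_convexHull ℝ A (hZA ω))
end

section
/- (Graph convex hull bounds, Banach space case.) Let (Ω, Σ, ℙ) be a probability space, 𝒳 a real Banach space, K ⊆ 𝒳, f : K → ℝ, and X : Ω → K such that X and f∘X are Bochner integrable. Let g_l, g_u : closure(CH(K)) → [-∞, ∞] be functions such that for every x ∈ closure(CH(K)), the slice (closure CH(G(f)))|_x is contained in {y ∈ ℝ : g_l(x) ≤ y ≤ g_u(x)}. Then 𝔼[X] ∈ closure(CH(K)) and g_l(𝔼[X]) ≤ 𝔼[f(X)] ≤ g_u(𝔼[X]). -/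
open MeasureTheory

/-- The integral of an integrable function with values in `s` against a probability measure
lies in the closed convex hull of `s`. -/
theorem integral_mem_closure_convexHull {Ω E : Type*} [MeasurableSpace Ω] {μ : Measure Ω}
    [IsProbabilityMeasure μ] [NormedAddCommGroup E] [NormedSpace ℝ E] [CompleteSpace E]
    {s : Set E} {X : Ω → E} (hX : ∀ ω, X ω ∈ s) (hXi : Integrable X μ) :
    ∫ ω, X ω ∂μ ∈ closure (convexHull ℝ s) :=
  (convex_convexHull ℝ s).closure.integral_mem isClosed_closure
    (.of_forall fun ω => subset_closure (subset_convexHull ℝ s (hX ω))) hXi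

/-- Graph convex hull bounds, Banach space case. If the slices of the closure of
the convex hull of the graph of `f` are enclosed between envelope functions `g_l, g_u` (with
values in the extended reals), then `𝔼[X] ∈ closure(CH(K))` and
`g_l(𝔼[X]) ≤ 𝔼[f(X)] ≤ g_u(𝔼[X])`. -/
theorem stmt_7 {Ω : Type*} [MeasurableSpace Ω] (ℙ : Measure Ω) [IsProbabilityMeasure ℙ]
    {𝒳 : Type*} [NormedAddCommGroup 𝒳] [NormedSpace ℝ 𝒳] [CompleteSpace 𝒳]
    (K : Set 𝒳) (f : 𝒳 → ℝ)
    (X : Ω → 𝒳) (hXK : ∀ ω, X ω ∈ K)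
    (hXint : Integrable X ℙ) (hfXint : Integrable (fun ω => f (X ω)) ℙ)
    (gl gu : 𝒳 → EReal)
    (henv : ∀ x ∈ closure (convexHull ℝ K), ∀ y : ℝ,
      (x, y) ∈ closure (convexHull ℝ ((fun x => (x, f x)) '' K)) →
      gl x ≤ (y : EReal) ∧ (y : EReal) ≤ gu x) :
    (∫ ω, X ω ∂ℙ) ∈ closure (convexHull ℝ K) ∧
    gl (∫ ω, X ω ∂ℙ) ≤ ((∫ ω, f (X ω) ∂ℙ : ℝ) : EReal) ∧
    ((∫ ω, f (X ω) ∂ℙ : ℝ) : EReal) ≤ gu (∫ ω, X ω ∂ℙ) := by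
  have hmem := integral_mem_closure_convexHull hXK hXint
  refine ⟨hmem, henv _ hmem _ ?_⟩
  rw [← integral_pair hXint hfXint]
  exact integral_mem_closure_convexHull (fun ω => Set.mem_image_of_mem _ (hXK ω))
    (hXint.prodMk hfXint)
end

section
/- (Sharpness of the graph convex hull bounds.) Let K ⊆ ℝ^m and f : K → ℝ. Define g_l(x) = inf(CH(G(f))|_x) and g_u(x) = sup(CH(G(f))|_x) for x ∈ CH(K) (infimum and supremum in the extended reals). Then for every x ∈ CH(K) and every y ∈ ℝ with g_l(x) < y < g_u(x), there exist a probability space (Ω̃, Σ̃, ℙ̃) and a random variable X̃ : Ω̃ → K such that X̃ and f∘X̃ are integrable, 𝔼[X̃] = x, and 𝔼[f(X̃)] = y. -/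
open MeasureTheory

/-- A point of a convex hull is the barycenter of a finitely supported probability measure. -/
theorem exists_isProbabilityMeasure_integral_eq_of_mem_convexHull {E : Type*}
    [NormedAddCommGroup E] [NormedSpace ℝ E] [CompleteSpace E] {s : Set E} {p : E}
    (hp : p ∈ convexHull ℝ s) :
    ∃ (Ω : Type) (_ : MeasurableSpace Ω) (μ : Measure Ω), IsProbabilityMeasure μ ∧
      ∃ Z : Ω → E, (∀ ω, Z ω ∈ s) ∧
        (∀ {F : Type} [NormedAddCommGroup F] (g : Ω → F), Integrable g μ) ∧
        ∫ ω, Z ω ∂μ = p := by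
  obtain ⟨ι, _, w, z, hw₀, hw₁, hz, rfl⟩ := mem_convexHull_iff_exists_fintype.1 hp
  let _ : MeasurableSpace ι := ⊤
  let μ : Measure ι := ∑ i, ENNReal.ofReal (w i) • Measure.dirac i
  have hμ : IsProbabilityMeasure μ := by
    constructor
    simp only [μ, Measure.coe_finsetSum, Finset.sum_apply, Measure.smul_apply, measure_univ,
      smul_eq_mul, mul_one]
    rw [← ENNReal.ofReal_sum_of_nonneg fun i _ => hw₀ i, hw₁, ENNReal.ofReal_one]
  refine ⟨ι, ⊤, μ, hμ, z, hz, fun g => .of_finite, ?_⟩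
  rw [integral_finsetSum_measure fun i _ =>
    (Integrable.of_finite (μ := Measure.dirac i)).smul_measure ENNReal.ofReal_ne_top]
  refine Finset.sum_congr rfl fun i _ => ?_
  rw [integral_smul_measure, integral_dirac, ENNReal.toReal_ofReal (hw₀ i)]

/-- Sharpness of the graph convex hull bounds. With
`g_l(x) = inf(CH(G(f))|_x)` and `g_u(x) = sup(CH(G(f))|_x)` (in the extended reals),
for every `x ∈ CH(K)` and real `y` with `g_l(x) < y < g_u(x)` there is a probability space
and a `K`-valued random variable `X̃` with `𝔼[X̃] = x` and `𝔼[f(X̃)] = y`. -/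
theorem stmt_8 (m : ℕ) (K : Set (Fin m → ℝ)) (f : (Fin m → ℝ) → ℝ)
    (x : Fin m → ℝ) (hx : x ∈ convexHull ℝ K) (y : ℝ)
    (hyl : sInf ((fun y : ℝ => (y : EReal)) ''
        {y : ℝ | (x, y) ∈ convexHull ℝ ((fun x => (x, f x)) '' K)}) < (y : EReal))
    (hyu : (y : EReal) < sSup ((fun y : ℝ => (y : EReal)) ''
        {y : ℝ | (x, y) ∈ convexHull ℝ ((fun x => (x, f x)) '' K)})) :
    ∃ (Ω' : Type) (_ : MeasurableSpace Ω') (ℙ' : Measure Ω'),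
      IsProbabilityMeasure ℙ' ∧
      ∃ X' : Ω' → Fin m → ℝ, (∀ ω, X' ω ∈ K) ∧
        Integrable X' ℙ' ∧ Integrable (fun ω => f (X' ω)) ℙ' ∧
        (∫ ω, X' ω ∂ℙ') = x ∧ (∫ ω, f (X' ω) ∂ℙ') = y := by
  obtain ⟨_, ⟨a, ha, rfl⟩, hay⟩ := sInf_lt_iff.1 hyl
  obtain ⟨_, ⟨b, hb, rfl⟩, hyb⟩ := lt_sSup_iff.1 hyu
  have hconv : Convex ℝ {y : ℝ | (x, y) ∈ convexHull ℝ ((fun x => (x, f x)) '' K)} := by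
    intro a ha b hb s t hs ht hst
    have h := convex_convexHull ℝ _ ha hb hs ht hst
    rwa [Prod.smul_mk, Prod.smul_mk, Prod.mk_add_mk, Convex.combo_self hst] at h
  have hy : (x, y) ∈ convexHull ℝ ((fun x => (x, f x)) '' K) :=
    hconv.ordConnected.out ha hb
      ⟨(EReal.coe_lt_coe_iff.1 hay).le, (EReal.coe_lt_coe_iff.1 hyb).le⟩
  obtain ⟨Ω, _, μ, hμ, Z, hZ, hint, hZp⟩ :=
    exists_isProbabilityMeasure_integral_eq_of_mem_convexHull hy
  choose X hXK hXZ using hZ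
  obtain rfl : (fun ω => (X ω, f (X ω))) = Z := funext hXZ
  rw [integral_pair (hint _) (hint _), Prod.mk.injEq] at hZp
  exact ⟨Ω, _, μ, hμ, X, hXK, hint _, hint _, hZp⟩
end

section
/- Let (Ω, Σ, ℙ) be a probability space, 𝒳 a real Banach space, K ⊆ 𝒳, f : K → ℝ, X : Ω → K a random variable such that X and f∘X are Bochner integrable, and ℱ ⊆ Σ a sub-σ-algebra. Then the pair (𝔼[X | ℱ](ω), 𝔼[f(X) | ℱ](ω)) lies in closure(CH(G(f))) for ℙ-almost every ω ∈ Ω. -/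
open MeasureTheory

/-- the pair `(𝔼[X|ℱ](ω), 𝔼[f(X)|ℱ](ω))` lies in the closure of the convex
hull of the graph of `f`, for ℙ-almost every `ω`. -/
theorem stmt_18 {Ω : Type*} {m0 : MeasurableSpace Ω} (ℙ : Measure Ω) [IsProbabilityMeasure ℙ]
    {𝒳 : Type*} [NormedAddCommGroup 𝒳] [NormedSpace ℝ 𝒳] [CompleteSpace 𝒳]
    (K : Set 𝒳) (f : 𝒳 → ℝ)
    (X : Ω → 𝒳) (hXK : ∀ ω, X ω ∈ K)
    (hXint : Integrable X ℙ) (hfXint : Integrable (fun ω => f (X ω)) ℙ)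
    (m : MeasurableSpace Ω) (hm : m ≤ m0) :
    ∀ᵐ ω ∂ℙ, ((ℙ[X|m]) ω, (ℙ[fun ω' => f (X ω')|m]) ω) ∈
      closure (convexHull ℝ ((fun x => (x, f x)) '' K)) := by
  have hpair : Integrable (fun ω => (X ω, f (X ω))) ℙ := hXint.prodMk hfXint
  have hmem := (convex_convexHull ℝ ((fun x => (x, f x)) '' K)).closure.condExp_mem hm hpair
    isClosed_closure (.of_forall fun ω =>
      subset_closure (subset_convexHull ℝ _ ⟨X ω, hXK ω, rfl⟩))
  have hfst := (ContinuousLinearMap.fst ℝ 𝒳 ℝ).comp_condExp_comm (m := m) hpair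
  have hsnd := (ContinuousLinearMap.snd ℝ 𝒳 ℝ).comp_condExp_comm (m := m) hpair
  filter_upwards [hmem, hfst, hsnd] with ω hω h₁ h₂
  have h : ((ℙ[X|m]) ω, (ℙ[fun ω' => f (X ω')|m]) ω) = (ℙ[fun ω => (X ω, f (X ω))|m]) ω :=
    Prod.ext h₁.symm h₂.symm
  rwa [h]
end

section
/- (Graph convex hull bounds for conditional expectations.) Let (Ω, Σ, ℙ) be a probability space, 𝒳 a real Banach space, K ⊆ 𝒳, f : K → ℝ, X : Ω → K a random variable such that X and f∘X are Bochner integrable, and ℱ ⊆ Σ a sub-σ-algebra. Let g_l, g_u : closure(CH(K)) → [-∞, ∞] be such that for every x ∈ closure(CH(K)), the slice (closure CH(G(f)))|_x is contained in {y ∈ ℝ : g_l(x) ≤ y ≤ g_u(x)}. Then for ℙ-almost every ω ∈ Ω, 𝔼[X | ℱ](ω) ∈ closure(CH(K)) and g_l(𝔼[X | ℱ](ω)) ≤ 𝔼[f(X) | ℱ](ω) ≤ g_u(𝔼[X | ℱ](ω)). -/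
open MeasureTheory

/-- Graph convex hull bounds for conditional expectations. -/
theorem stmt_19 {Ω : Type*} {m0 : MeasurableSpace Ω} (ℙ : Measure Ω) [IsProbabilityMeasure ℙ]
    {𝒳 : Type*} [NormedAddCommGroup 𝒳] [NormedSpace ℝ 𝒳] [CompleteSpace 𝒳]
    (K : Set 𝒳) (f : 𝒳 → ℝ)
    (X : Ω → 𝒳) (hXK : ∀ ω, X ω ∈ K)
    (hXint : Integrable X ℙ) (hfXint : Integrable (fun ω => f (X ω)) ℙ)
    (m : MeasurableSpace Ω) (hm : m ≤ m0)
    (gl gu : 𝒳 → EReal)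
    (henv : ∀ x ∈ closure (convexHull ℝ K), ∀ y : ℝ,
      (x, y) ∈ closure (convexHull ℝ ((fun x => (x, f x)) '' K)) →
      gl x ≤ (y : EReal) ∧ (y : EReal) ≤ gu x) :
    ∀ᵐ ω ∂ℙ, (ℙ[X|m]) ω ∈ closure (convexHull ℝ K) ∧
      gl ((ℙ[X|m]) ω) ≤ (((ℙ[fun ω' => f (X ω')|m]) ω : ℝ) : EReal) ∧
      (((ℙ[fun ω' => f (X ω')|m]) ω : ℝ) : EReal) ≤ gu ((ℙ[X|m]) ω) := by
  have hpair : Integrable (fun ω => (X ω, f (X ω))) ℙ := hXint.prodMk hfXint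
  have hmemK := Convex.condExp_mem hm hXint isClosed_closure (convex_convexHull ℝ K).closure
    (ae_of_all ℙ fun ω => subset_closure (subset_convexHull ℝ K (hXK ω)))
  have hmemG := Convex.condExp_mem hm hpair isClosed_closure
    (convex_convexHull ℝ ((fun x => (x, f x)) '' K)).closure
    (ae_of_all ℙ fun ω =>
      subset_closure (subset_convexHull ℝ _ ⟨X ω, hXK ω, rfl⟩))
  have hfst := (ContinuousLinearMap.fst ℝ 𝒳 ℝ).comp_condExp_comm hpair (m := m)
  have hsnd := (ContinuousLinearMap.snd ℝ 𝒳 ℝ).comp_condExp_comm hpair (m := m)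
  filter_upwards [hmemK, hmemG, hfst, hsnd] with ω hK hG h₁ h₂
  refine ⟨hK, henv _ hK _ ?_⟩
  convert hG using 1
  exact Prod.ext h₁.symm h₂.symm
end
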